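/- (Lemma 2) Let y* = (x*, λ*, v*) ∈ Ω. Suppose there exist α > 0, β > 0, γ > 0 such that ⟨p(x) − p(x*), x − x*⟩ ≥ α‖x − x*‖² for all x ∈ ℝ₊ⁿ, ⟨c(λ) − c(λ*), λ − λ*⟩ ≤ −β‖λ − λ*‖² for all λ ∈ ℝ₊ⁿ, and ⟨r(v) − r(v*), v − v*⟩ ≥ γ‖v − v*‖² for all v ∈ ℝ₊ᵐ. Then with δ = min{α, β, γ} > 0, for all y ∈ Ω one has ⟨g(y) − g(y*), y − y*⟩ ≤ −δ‖y − y*‖². -/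

import Mathlib

open Matrix Filter
open scoped BigOperators

noncomputable section

/-- Vectors in ℝ^k. -/
abbrev Vec (k : ℕ) := Fin k → ℝ

/-- Standard Euclidean inner product on ℝ^k. -/
def ip {k : ℕ} (u v : Vec k) : ℝ := ∑ i, u i * v i

/-- Standard Euclidean norm on ℝ^k. -/
def nrm {k : ℕ} (u : Vec k) : ℝ := Real.sqrt (ip u u)

/-- The space ℝⁿ × ℝⁿ × ℝᵐ of triples y = (x, λ, v). -/
abbrev Triple (n m : ℕ) := Vec n × Vec n × Vec m

/-- Euclidean inner product on the triple space. -/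
def ipT {n m : ℕ} (y z : Triple n m) : ℝ :=
  ip y.1 z.1 + ip y.2.1 z.2.1 + ip y.2.2 z.2.2

/-- Euclidean norm on the triple space. -/
def nrmT {n m : ℕ} (y : Triple n m) : ℝ := Real.sqrt (ipT y y)

/-- Ω = ℝ₊ⁿ × ℝ₊ⁿ × ℝ₊ᵐ. -/
def Om (n m : ℕ) : Set (Triple n m) :=
  {y | (∀ j, 0 ≤ y.1 j) ∧ (∀ j, 0 ≤ y.2.1 j) ∧ (∀ i, 0 ≤ y.2.2 i)}

/-- The operator g(x, λ, v) = ((I − A)ᵀλ − p(x) − Bᵀv, c(λ) − (I − A)x, Bx − r(v)). -/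
def gOp {n m : ℕ} (A : Matrix (Fin n) (Fin n) ℝ) (B : Matrix (Fin m) (Fin n) ℝ)
    (p c : Vec n → Vec n) (r : Vec m → Vec m) (y : Triple n m) : Triple n m :=
  ((1 - A)ᵀ *ᵥ y.2.1 - p y.1 - Bᵀ *ᵥ y.2.2,
   c y.2.1 - (1 - A) *ᵥ y.1,
   B *ᵥ y.1 - r y.2.2)

/-- P_Ω : componentwise positive part (Euclidean projection onto Ω). -/
def projOm {n m : ℕ} (y : Triple n m) : Triple n m :=
  (fun j => max (y.1 j) 0, fun j => max (y.2.1 j) 0, fun i => max (y.2.2 i) 0)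

/-!
`g` is the sum of a linear map that is skew-adjoint for the inner product on triples and of a map
acting separately on `x`, `λ` and `v`. The skew part contributes nothing to
`⟨g(y) - g(y*), y - y*⟩`, so only the monotonicity of `p`, `-c` and `r` matters, and the three
moduli combine into their minimum.
-/

section InnerProduct

variable {k l n m : ℕ}

theorem ip_self_nonneg (u : Vec k) : 0 ≤ ip u u :=
  Finset.sum_nonneg fun i _ => mul_self_nonneg (u i)

theorem ip_add_left (u v w : Vec k) : ip (u + v) w = ip u w + ip v w :=
  add_dotProduct u v w

theorem ip_sub_left (u v w : Vec k) : ip (u - v) w = ip u w - ip v w :=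
  sub_dotProduct u v w

theorem ip_neg_left (u w : Vec k) : ip (-u) w = -ip u w :=
  neg_dotProduct u w

theorem ip_transpose_mulVec (M : Matrix (Fin k) (Fin l) ℝ) (u : Vec k) (w : Vec l) :
    ip (Mᵀ *ᵥ u) w = ip (M *ᵥ w) u :=
  calc
    (Mᵀ *ᵥ u) ⬝ᵥ w = w ⬝ᵥ Mᵀ *ᵥ u := dotProduct_comm _ _
    _ = u ⬝ᵥ M *ᵥ w := dotProduct_transpose_mulVec M w u
    _ = (M *ᵥ w) ⬝ᵥ u := dotProduct_comm _ _

theorem nrm_sq (u : Vec k) : nrm u ^ 2 = ip u u :=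
  Real.sq_sqrt (ip_self_nonneg u)

theorem ipT_add_left (y y' z : Triple n m) : ipT (y + y') z = ipT y z + ipT y' z := by
  simp only [ipT, Prod.fst_add, Prod.snd_add, ip_add_left]
  ring

theorem ipT_self (y : Triple n m) :
    ipT y y = nrm y.1 ^ 2 + nrm y.2.1 ^ 2 + nrm y.2.2 ^ 2 := by
  simp only [ipT, nrm_sq]

theorem nrmT_sq (y : Triple n m) :
    nrmT y ^ 2 = nrm y.1 ^ 2 + nrm y.2.1 ^ 2 + nrm y.2.2 ^ 2 := by
  have ipT_self_nonneg : 0 ≤ ipT y y := by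
    rw [ipT_self]
    positivity
  rw [nrmT, Real.sq_sqrt ipT_self_nonneg, ipT_self]

theorem min_mul_nrmT_sq_le (α β γ : ℝ) (y : Triple n m) :
    min α (min β γ) * nrmT y ^ 2 ≤
      α * nrm y.1 ^ 2 + β * nrm y.2.1 ^ 2 + γ * nrm y.2.2 ^ 2 := by
  rw [nrmT_sq, mul_add, mul_add]
  gcongr
  · exact min_le_left α _
  · exact (min_le_right α _).trans (min_le_left β γ)
  · exact (min_le_right α _).trans (min_le_right β γ)

end InnerProduct

section Decomposition

variable {n m : ℕ}

/-- The linear map `(x, λ, v) ↦ (Mᵀλ - Bᵀv, -Mx, Bx)`, which for `M = I - A` is the part of `g`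
that couples the three blocks of variables. -/
def coupling (M : Matrix (Fin n) (Fin n) ℝ) (B : Matrix (Fin m) (Fin n) ℝ) :
    Triple n m →ₗ[ℝ] Triple n m where
  toFun y := (Mᵀ *ᵥ y.2.1 - Bᵀ *ᵥ y.2.2, -(M *ᵥ y.1), B *ᵥ y.1)
  map_add' y z := by
    simp only [Prod.fst_add, Prod.snd_add, mulVec_add, neg_add, add_sub_add_comm, Prod.mk_add_mk]
  map_smul' a y := by
    simp only [Prod.smul_fst, Prod.smul_snd, mulVec_smul, ← smul_sub, ← smul_neg, Prod.smul_mk,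
      RingHom.id_apply]

/-- The map `(x, λ, v) ↦ (-p(x), c(λ), -r(v))`, the part of `g` that acts on each of the three
blocks of variables separately. -/
def blockwise (p c : Vec n → Vec n) (r : Vec m → Vec m) (y : Triple n m) : Triple n m :=
  (-p y.1, c y.2.1, -r y.2.2)

theorem ipT_coupling_self (M : Matrix (Fin n) (Fin n) ℝ) (B : Matrix (Fin m) (Fin n) ℝ)
    (z : Triple n m) : ipT (coupling M B z) z = 0 := by
  simp only [ipT, coupling, LinearMap.coe_mk, AddHom.coe_mk, ip_sub_left, ip_neg_left,
    ip_transpose_mulVec]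
  ring

theorem ipT_blockwise_sub (p c : Vec n → Vec n) (r : Vec m → Vec m) (y y' z : Triple n m) :
    ipT (blockwise p c r y - blockwise p c r y') z =
      -ip (p y.1 - p y'.1) z.1 + ip (c y.2.1 - c y'.2.1) z.2.1 -
        ip (r y.2.2 - r y'.2.2) z.2.2 := by
  simp only [ipT, blockwise, Prod.mk_sub_mk, ip_sub_left, ip_neg_left]
  ring

theorem gOp_eq_coupling_add_blockwise (A : Matrix (Fin n) (Fin n) ℝ)
    (B : Matrix (Fin m) (Fin n) ℝ) (p c : Vec n → Vec n) (r : Vec m → Vec m) (y : Triple n m) :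
    gOp A B p c r y = coupling (1 - A) B y + blockwise p c r y := by
  ext1
  · simp only [gOp, coupling, blockwise, LinearMap.coe_mk, AddHom.coe_mk, Prod.mk_add_mk]
    abel
  · simp only [gOp, coupling, blockwise, LinearMap.coe_mk, AddHom.coe_mk, Prod.mk_add_mk,
      sub_eq_add_neg, add_comm]

theorem ipT_gOp_sub (A : Matrix (Fin n) (Fin n) ℝ) (B : Matrix (Fin m) (Fin n) ℝ)
    (p c : Vec n → Vec n) (r : Vec m → Vec m) (y y' : Triple n m) :
    ipT (gOp A B p c r y - gOp A B p c r y') (y - y') =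
      ipT (blockwise p c r y - blockwise p c r y') (y - y') := by
  rw [gOp_eq_coupling_add_blockwise, gOp_eq_coupling_add_blockwise, add_sub_add_comm, ← map_sub,
    ipT_add_left, ipT_coupling_self, zero_add]

end Decomposition

theorem stmt7_general {n m : ℕ} (A : Matrix (Fin n) (Fin n) ℝ) (B : Matrix (Fin m) (Fin n) ℝ)
    (p c : Vec n → Vec n) (r : Vec m → Vec m) (y ys : Triple n m) {α β γ : ℝ}
    (hp : α * nrm (y.1 - ys.1) ^ 2 ≤ ip (p y.1 - p ys.1) (y.1 - ys.1))
    (hc : ip (c y.2.1 - c ys.2.1) (y.2.1 - ys.2.1) ≤ -β * nrm (y.2.1 - ys.2.1) ^ 2)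
    (hr : γ * nrm (y.2.2 - ys.2.2) ^ 2 ≤ ip (r y.2.2 - r ys.2.2) (y.2.2 - ys.2.2)) :
    ipT (gOp A B p c r y - gOp A B p c r ys) (y - ys) ≤
      -(min α (min β γ)) * nrmT (y - ys) ^ 2 :=
  calc
    ipT (gOp A B p c r y - gOp A B p c r ys) (y - ys)
    _ = -ip (p y.1 - p ys.1) (y.1 - ys.1) + ip (c y.2.1 - c ys.2.1) (y.2.1 - ys.2.1) -
          ip (r y.2.2 - r ys.2.2) (y.2.2 - ys.2.2) :=
      (ipT_gOp_sub A B p c r y ys).trans (ipT_blockwise_sub p c r y ys (y - ys))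
    _ ≤ -(α * nrm (y.1 - ys.1) ^ 2 + β * nrm (y.2.1 - ys.2.1) ^ 2 +
          γ * nrm (y.2.2 - ys.2.2) ^ 2) := by linarith
    _ ≤ -(min α (min β γ) * nrmT (y - ys) ^ 2) :=
      neg_le_neg (min_mul_nrmT_sq_le α β γ (y - ys))
    _ = -(min α (min β γ)) * nrmT (y - ys) ^ 2 := (neg_mul _ _).symm

/-- Lemma 2: if p, c, r are strongly monotone at the equilibrium
y* = (x*, λ*, v*), then g is strongly monotone at y* with modulus δ = min{α, β, γ}. -/
theorem stmt7 {n m : ℕ} (hn : 0 < n) (hm : 0 < m)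
    (A : Matrix (Fin n) (Fin n) ℝ) (B : Matrix (Fin m) (Fin n) ℝ)
    (p c : Vec n → Vec n) (r : Vec m → Vec m)
    (xs lams : Vec n) (vs : Vec m) (hOm : (xs, lams, vs) ∈ Om n m)
    (α β γ : ℝ) (hα : 0 < α) (hβ : 0 < β) (hγ : 0 < γ)
    (hp : ∀ x : Vec n, (∀ j, 0 ≤ x j) →
      α * nrm (x - xs) ^ 2 ≤ ip (p x - p xs) (x - xs))
    (hc : ∀ l : Vec n, (∀ j, 0 ≤ l j) →
      ip (c l - c lams) (l - lams) ≤ -β * nrm (l - lams) ^ 2)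
    (hr : ∀ v : Vec m, (∀ i, 0 ≤ v i) →
      γ * nrm (v - vs) ^ 2 ≤ ip (r v - r vs) (v - vs)) :
    ∀ y ∈ Om n m,
      ipT (gOp A B p c r y - gOp A B p c r (xs, lams, vs)) (y - (xs, lams, vs)) ≤
        -(min α (min β γ)) * nrmT (y - (xs, lams, vs)) ^ 2 := fun y hy =>
  stmt7_general A B p c r y (xs, lams, vs) (hp y.1 hy.1) (hc y.2.1 hy.2.1) (hr y.2.2 hy.2.2)
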